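/- For all real a > 0 and b > 0, ∫₀^∞ x^{-3/2} · exp(−(a·x + b/x)/2) dx = √(2π/b) · exp(−√(a·b)). (This is the normalization identity for the Inverse-Gaussian distribution, equivalently the GIG distribution with index p = −1/2, used to integrate out the latent scales in the scale-mixture representation.) -/

import Mathlib

open MeasureTheory Real Set

/-!
Substituting `x = u⁻²` and completing the square,
`a / u² + b u² = (√b u - √a / u)² + 2 √(a b)`, turns the integral into
`2 exp (-√(a b)) ∫₀^∞ exp (-(√b u - √a / u)² / 2) du`.

The last integral is evaluated by the Cauchy–Schlömilch transformation. The map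
`φ u = β u - α / u` is an increasing bijection from `(0, ∞)` onto `ℝ` with derivative
`β + α / u²`, so `∫₀^∞ (β + α / u²) f (φ u) du = ∫ f`. The reflection `u ↦ (α / β) / u` changes the
sign of `φ` and exchanges the two weights `β` and `α / u²`, so for even `f` each of them contributes
half of `∫ f`.
-/

section

variable {E : Type*} [NormedAddCommGroup E] [NormedSpace ℝ E] {α β : ℝ}

theorem integral_rpow_inv_sub_one_smul_Ioi {p : ℝ} (hp : p ≠ 0) (g : ℝ → E) :
    ∫ x in Ioi (0 : ℝ), x ^ (p⁻¹ - 1) • g x = |p| • ∫ u in Ioi (0 : ℝ), g (u ^ p) := by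
  rw [← integral_comp_rpow_Ioi (fun u ↦ g (u ^ p)) (inv_ne_zero hp), ← integral_smul]
  refine setIntegral_congr_fun measurableSet_Ioi fun x (hx : 0 < x) ↦ ?_
  simp only [rpow_inv_rpow hx.le hp, smul_smul, ← mul_assoc, abs_inv,
    mul_inv_cancel₀ (abs_ne_zero.2 hp), one_mul]

theorem integral_div_sq_smul_comp_div_Ioi {c : ℝ} (hc : 0 < c) (g : ℝ → E) :
    ∫ u in Ioi (0 : ℝ), (c / u ^ 2) • g (c / u) = ∫ u in Ioi (0 : ℝ), g u := by
  calc ∫ u in Ioi (0 : ℝ), (c / u ^ 2) • g (c / u)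
      = c • ∫ u in Ioi (0 : ℝ), (|(-1 : ℝ)| * u ^ (-1 - 1 : ℝ)) • g (c * u ^ (-1 : ℝ)) := by
        rw [← integral_smul]
        refine setIntegral_congr_fun measurableSet_Ioi fun u (hu : 0 < u) ↦ ?_
        have hsq : u ^ (-1 - 1 : ℝ) = (u ^ 2)⁻¹ := by
          rw [← rpow_natCast, ← rpow_neg hu.le]
          norm_num
        simp only [hsq, rpow_neg_one, abs_neg, abs_one, one_mul, smul_smul, div_eq_mul_inv]
    _ = c • ∫ u in Ioi (0 : ℝ), g (c * u) := by
        rw [integral_comp_rpow_Ioi (fun u ↦ g (c * u)) (by norm_num)]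
    _ = ∫ u in Ioi (0 : ℝ), g u := by
        rw [integral_comp_mul_left_Ioi' g 0 hc, mul_zero]

theorem monotoneOn_mul_sub_div_Ioi (hα : 0 ≤ α) (hβ : 0 ≤ β) :
    MonotoneOn (fun u : ℝ ↦ β * u - α / u) (Ioi 0) := fun u (hu : 0 < u) v _ huv ↦ by
  dsimp only
  gcongr

theorem image_mul_sub_div_Ioi (hα : 0 < α) (hβ : 0 < β) :
    (fun u : ℝ ↦ β * u - α / u) '' Ioi 0 = univ := by
  refine eq_univ_of_forall fun t ↦ ?_
  -- The preimage of `t` is the positive root of `β u² - t u - α = 0`.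
  set s := √(t ^ 2 + 4 * α * β) with hs
  have hs_sq : s ^ 2 = t ^ 2 + 4 * α * β := sq_sqrt (by positivity)
  have hs_gt : |t| < s := by
    rw [hs, ← sqrt_sq_eq_abs]
    exact sqrt_lt_sqrt (sq_nonneg t) (lt_add_of_pos_right _ (by positivity))
  have hts : 0 < t + s := by linarith [neg_abs_le t]
  refine ⟨(t + s) / (2 * β), div_pos hts (by positivity), ?_⟩
  field_simp
  linear_combination hs_sq

theorem hasDerivAt_mul_sub_div (α β : ℝ) {u : ℝ} (hu : u ≠ 0) :
    HasDerivAt (fun u : ℝ ↦ β * u - α / u) (β + α / u ^ 2) u := by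
  refine (((hasDerivAt_id u).const_mul β).sub ((hasDerivAt_inv hu).const_mul α)).congr_deriv ?_
  ring

theorem integral_deriv_smul_comp_mul_sub_div_Ioi (hα : 0 < α) (hβ : 0 < β) (f : ℝ → E) :
    ∫ u in Ioi (0 : ℝ), (β + α / u ^ 2) • f (β * u - α / u) = ∫ t, f t := by
  rw [← setIntegral_univ (f := f), ← image_mul_sub_div_Ioi hα hβ]
  exact (integral_image_eq_integral_deriv_smul_of_monotoneOn measurableSet_Ioi
    (fun u hu ↦ (hasDerivAt_mul_sub_div α β (ne_of_gt hu)).hasDerivWithinAt)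
    (monotoneOn_mul_sub_div_Ioi hα.le hβ.le) f).symm

theorem integrableOn_deriv_smul_comp_mul_sub_div_Ioi_iff (hα : 0 < α) (hβ : 0 < β) {f : ℝ → E} :
    IntegrableOn (fun u ↦ (β + α / u ^ 2) • f (β * u - α / u)) (Ioi 0) ↔ Integrable f := by
  rw [← integrableOn_univ, ← image_mul_sub_div_Ioi hα hβ]
  exact (integrableOn_image_iff_integrableOn_deriv_smul_of_monotoneOn measurableSet_Ioi
    (fun u hu ↦ (hasDerivAt_mul_sub_div α β (ne_of_gt hu)).hasDerivWithinAt)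
    (monotoneOn_mul_sub_div_Ioi hα.le hβ.le) f).symm

theorem integrableOn_comp_mul_sub_div_Ioi (hα : 0 < α) (hβ : 0 < β) {f : ℝ → E}
    (hf : Integrable f) : IntegrableOn (fun u ↦ f (β * u - α / u)) (Ioi 0) := by
  have hweight : ∀ u : ℝ, 0 < β + α / u ^ 2 := fun u ↦ by positivity
  have hbound : ∀ u : ℝ, ‖(β + α / u ^ 2)⁻¹‖ ≤ β⁻¹ := fun u ↦ by
    rw [norm_of_nonneg (inv_pos.2 (hweight u)).le]
    exact inv_anti₀ hβ (le_add_of_nonneg_right (by positivity))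
  have hmeas : Measurable fun u : ℝ ↦ (β + α / u ^ 2)⁻¹ := by fun_prop
  have hderiv := (integrableOn_deriv_smul_comp_mul_sub_div_Ioi_iff hα hβ).2 hf
  exact (hderiv.bdd_smul β⁻¹ hmeas.aestronglyMeasurable (ae_of_all _ hbound)).congr
    (ae_of_all _ fun u ↦ inv_smul_smul₀ (hweight u).ne' _)

theorem integral_div_sq_smul_comp_mul_sub_div_Ioi (hα : 0 < α) (hβ : 0 < β) {f : ℝ → E}
    (hf : f.Even) :
    ∫ u in Ioi (0 : ℝ), (α / u ^ 2) • f (β * u - α / u)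
      = β • ∫ u in Ioi (0 : ℝ), f (β * u - α / u) := by
  rw [← integral_div_sq_smul_comp_div_Ioi (div_pos hα hβ) fun u ↦ f (β * u - α / u),
    ← integral_smul]
  refine setIntegral_congr_fun measurableSet_Ioi fun u (hu : 0 < u) ↦ ?_
  have hreflect : β * (α / β / u) - α / (α / β / u) = -(β * u - α / u) := by
    field_simp
    ring
  have hswap : β * (α / β / u ^ 2) = α / u ^ 2 := by field_simp
  simp only [hreflect, hf _, smul_smul, hswap]

theorem integral_comp_mul_sub_div_Ioi_of_even (hα : 0 < α) (hβ : 0 < β) {f : ℝ → E}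
    (hf : Integrable f) (hf_even : f.Even) :
    ∫ u in Ioi (0 : ℝ), f (β * u - α / u) = (2 * β)⁻¹ • ∫ t, f t := by
  have hcomp : IntegrableOn (fun u ↦ β • f (β * u - α / u)) (Ioi 0) :=
    (integrableOn_comp_mul_sub_div_Ioi hα hβ hf).smul β
  have hrest : IntegrableOn (fun u ↦ (α / u ^ 2) • f (β * u - α / u)) (Ioi 0) := by
    refine (((integrableOn_deriv_smul_comp_mul_sub_div_Ioi_iff hα hβ).2 hf).sub hcomp).congr
      (ae_of_all _ fun u ↦ ?_)
    simp only [Pi.sub_apply, add_smul, add_sub_cancel_left]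
  rw [eq_inv_smul_iff₀ (by positivity)]
  calc (2 * β) • ∫ u in Ioi (0 : ℝ), f (β * u - α / u)
      = (∫ u in Ioi (0 : ℝ), β • f (β * u - α / u))
          + ∫ u in Ioi (0 : ℝ), (α / u ^ 2) • f (β * u - α / u) := by
        rw [integral_div_sq_smul_comp_mul_sub_div_Ioi hα hβ hf_even, integral_smul, two_mul,
          add_smul]
    _ = ∫ u in Ioi (0 : ℝ), (β + α / u ^ 2) • f (β * u - α / u) := by
        simp only [← integral_add hcomp hrest, add_smul]
    _ = ∫ t, f t := integral_deriv_smul_comp_mul_sub_div_Ioi hα hβ f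

end

theorem integral_exp_neg_sq_mul_sub_div_Ioi {α β c : ℝ} (hα : 0 < α) (hβ : 0 < β) (hc : 0 < c) :
    ∫ u in Ioi (0 : ℝ), exp (-c * (β * u - α / u) ^ 2) = (2 * β)⁻¹ * √(π / c) := by
  rw [← integral_gaussian c, ← smul_eq_mul]
  exact integral_comp_mul_sub_div_Ioi_of_even hα hβ (integrable_exp_neg_mul_sq hc)
    fun t ↦ by simp only [neg_sq]

theorem exp_neg_div_sq_add_mul_sq (α β : ℝ) {u : ℝ} (hu : u ≠ 0) :
    exp (-(α ^ 2 / u ^ 2 + β ^ 2 * u ^ 2) / 2)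
      = exp (-(α * β)) * exp (-(1 / 2) * (β * u - α / u) ^ 2) := by
  rw [← exp_add]
  congr 1
  field_simp
  ring

/-- The normalization identity for the Inverse-Gaussian distribution
(the `GIG` distribution with index `p = -1/2`): for all `a, b > 0`,
`∫₀^∞ x^(-3/2) exp(-(a x + b / x)/2) dx = √(2π/b) · exp(-√(a b))`. -/
theorem invGaussian_normalization (a b : ℝ) (ha : 0 < a) (hb : 0 < b) :
    (∫ x in Ioi (0 : ℝ), x ^ (-(3 : ℝ) / 2) * Real.exp (-(a * x + b / x) / 2))
      = Real.sqrt (2 * π / b) * Real.exp (-Real.sqrt (a * b)) := by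
  calc ∫ x in Ioi (0 : ℝ), x ^ (-(3 : ℝ) / 2) * exp (-(a * x + b / x) / 2)
      = 2 * ∫ u in Ioi (0 : ℝ), exp (-(a * u ^ (-2 : ℝ) + b / u ^ (-2 : ℝ)) / 2) := by
        have hexponent : -(3 : ℝ) / 2 = (-2)⁻¹ - 1 := by norm_num
        simpa only [hexponent, smul_eq_mul, abs_neg, abs_two] using
          integral_rpow_inv_sub_one_smul_Ioi (neg_ne_zero.2 two_ne_zero)
            fun x ↦ exp (-(a * x + b / x) / 2)
    _ = 2 * ∫ u in Ioi (0 : ℝ), exp (-(√a * √b)) * exp (-(1 / 2) * (√b * u - √a / u) ^ 2) := by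
        congr 1
        refine setIntegral_congr_fun measurableSet_Ioi fun u (hu : 0 < u) ↦ ?_
        simp only [← exp_neg_div_sq_add_mul_sq _ _ hu.ne', sq_sqrt ha.le, sq_sqrt hb.le,
          rpow_neg hu.le, rpow_two, div_inv_eq_mul, div_eq_mul_inv a]
    _ = √(2 * π / b) * exp (-√(a * b)) := by
        rw [integral_const_mul, integral_exp_neg_sq_mul_sub_div_Ioi (sqrt_pos.2 ha) (sqrt_pos.2 hb)
          one_half_pos, sqrt_mul ha.le, sqrt_div' _ hb.le, div_div_eq_mul_div, div_one, mul_comm π]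
        field_simp
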